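/- Let n ≥ 0 and m ≥ 1 be integers with n+m ≥ 2, let 1 < p ≤ q < ∞, and let α, β ∈ ℝ satisfy α + β ≥ 0, α < m/p', β < m/q and 1/q = 1/p + (α+β−1)/(n+m). Then there exists a constant S > 0 such that for every smooth compactly supported function u : ℝ^{n+m} → ℝ, (∫_{ℝ^{n+m}} |x̂|^{−βq} |u(x,x̂)|^q dx dx̂)^{1/q} ≤ S · (∫_{ℝ^{n+m}} |x̂|^{αp} |∇u(x,x̂)|^p dx dx̂)^{1/p}. -/

import Mathlib

open MeasureTheory ENNReal

noncomputable section

/-- The norm `|x̂|` of the last `m` coordinates of a point of `ℝ^{n+m}`. -/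
def hatNorm (n m : ℕ) (X : EuclideanSpace ℝ (Fin n ⊕ Fin m)) : ℝ :=
  Real.sqrt (∑ j : Fin m, X (Sum.inr j) ^ 2)

/-!
Averaging `|v(x)| ≤ ∫ |∇v|` over the rays from `x` in a cone that points away from `ker P`, where
`P (x, x̂) = x̂`, bounds `|v|` by an integral of `|∇v|` against a kernel of Riesz type supported
where `|x - y| ≲ |P y|`. On that region the weight `|P x| ^ r` behaves on balls like Lebesgue
measure times `|P y| ^ r`, so the kernel integrates well over every set of finite weighted measure.
This gives a weak-type estimate for the superlevel sets of `v` with an `L¹` norm of the gradient on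
the right. Truncating `v` at dyadic levels upgrades it to the strong inequality for `p = 1`, and
applying the latter to `|u| ^ σ`, together with Hölder's inequality, yields the case `p > 1`.
-/

section Development

open Module Metric Set
open scoped NNReal

lemma lintegral_Ioi_rpow_of_lt {a : ℝ} (ha : a < -1) {r : ℝ} (hr : 0 < r) :
    ∫⁻ t in Ioi r, ENNReal.ofReal (t ^ a) = ENNReal.ofReal (-r ^ (a + 1) / (a + 1)) := by
  rw [← integral_Ioi_rpow_of_lt ha hr, ofReal_integral_eq_lintegral_ofReal
    (integrableOn_Ioi_rpow_of_lt ha hr)]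
  filter_upwards [ae_restrict_mem measurableSet_Ioi] with t ht
  exact Real.rpow_nonneg (hr.trans ht).le a

lemma setLIntegral_Ioc_min_le_of_le {c A r ρ : ℝ} (hc0 : 0 ≤ c) (hc1 : c ≤ 1) (hA : 0 ≤ A)
    (hr : 0 < r) (hρ : 0 < ρ) {f : ℝ → ℝ≥0∞} (hf : ∀ t ∈ Ioc 0 ρ, f t ≤ ENNReal.ofReal A) :
    ∫⁻ t in Ioc 0 (min r ρ), f t ≤ ENNReal.ofReal (ρ ^ c * (A * r ^ (1 - c))) := by
  have hmin : min r ρ ≤ ρ ^ c * r ^ (1 - c) := by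
    have hpos : 0 < min r ρ := lt_min hr hρ
    calc min r ρ = min r ρ ^ c * min r ρ ^ (1 - c) := by
          rw [← Real.rpow_add hpos, add_sub_cancel, Real.rpow_one]
      _ ≤ ρ ^ c * r ^ (1 - c) := by
          gcongr
          exacts [min_le_right _ _, min_le_left _ _]
  calc ∫⁻ t in Ioc 0 (min r ρ), f t ≤ ∫⁻ _ in Ioc 0 (min r ρ), ENNReal.ofReal A :=
        setLIntegral_mono' measurableSet_Ioc fun t ht ↦ hf t ⟨ht.1, ht.2.trans (min_le_right _ _)⟩
    _ = ENNReal.ofReal (A * min r ρ) := by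
        rw [setLIntegral_const, Real.volume_Ioc, sub_zero, ENNReal.ofReal_mul hA]
    _ ≤ ENNReal.ofReal (ρ ^ c * (A * r ^ (1 - c))) := by
        rw [mul_left_comm]
        gcongr

-- The factor `(ρ / t) ^ c ≥ 1` makes the bound integrable at infinity even when `N = 1`.
lemma setLIntegral_Ioc_le_of_le_mul_rpow {N c B r ρ : ℝ} (hc : 0 ≤ c) (hNc : 1 < N + c)
    (hB : 0 ≤ B) (hr : 0 < r) {f : ℝ → ℝ≥0∞}
    (hf : ∀ t ∈ Ioc r ρ, f t ≤ ENNReal.ofReal (B * t ^ (-N))) :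
    ∫⁻ t in Ioc r ρ, f t ≤
      ENNReal.ofReal (1 / (N + c - 1) * (ρ ^ c * (B * r ^ (-N) * r ^ (1 - c)))) := by
  rcases le_or_gt ρ r with hρr | hrρ
  · simp [Ioc_eq_empty hρr.not_gt]
  have hρ : 0 < ρ := hr.trans hrρ
  have hbound : ∀ t ∈ Ioc r ρ, f t ≤ ENNReal.ofReal (B * ρ ^ c) * ENNReal.ofReal (t ^ (-N - c)) :=
    fun t ht ↦ by
      have ht0 : 0 < t := hr.trans ht.1
      refine (hf t ht).trans ?_
      rw [← ENNReal.ofReal_mul (by positivity), Real.rpow_sub ht0, mul_assoc, ← mul_div_assoc,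
        mul_comm (ρ ^ c), mul_div_assoc, ← Real.div_rpow hρ.le ht0.le]
      gcongr
      exact le_mul_of_one_le_right (by positivity) (Real.one_le_rpow ((one_le_div ht0).2 ht.2) hc)
  calc ∫⁻ t in Ioc r ρ, f t
      ≤ ∫⁻ t in Ioi r, ENNReal.ofReal (B * ρ ^ c) * ENNReal.ofReal (t ^ (-N - c)) :=
        (setLIntegral_mono' measurableSet_Ioc hbound).trans (lintegral_mono_set Ioc_subset_Ioi_self)
    _ = ENNReal.ofReal (B * ρ ^ c * (-r ^ (-N - c + 1) / (-N - c + 1))) := by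
        rw [lintegral_const_mul' _ _ ENNReal.ofReal_ne_top,
          lintegral_Ioi_rpow_of_lt (by linarith) hr, ← ENNReal.ofReal_mul (by positivity)]
    _ = _ := by
        rw [show -N - c + 1 = -N + (1 - c) by ring, Real.rpow_add hr, neg_div, ← div_neg,
          show -(-N + (1 - c)) = N + c - 1 by ring]
        congr 1
        ring

lemma setLIntegral_Ioc_le_of_le_of_le_mul_rpow {N c A B ρ : ℝ} (hN : 0 < N) (hc0 : 0 ≤ c)
    (hc1 : c ≤ 1) (hNc : 1 < N + c) (hA : 0 < A) (hB : 0 < B) (hρ : 0 < ρ) {f : ℝ → ℝ≥0∞}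
    (hfA : ∀ t ∈ Ioc 0 ρ, f t ≤ ENNReal.ofReal A)
    (hfB : ∀ t ∈ Ioc 0 ρ, f t ≤ ENNReal.ofReal (B * t ^ (-N))) :
    ∫⁻ t in Ioc 0 ρ, f t ≤ ENNReal.ofReal
      ((1 + 1 / (N + c - 1)) * (ρ ^ c * (A ^ ((N + c - 1) / N) * B ^ ((1 - c) / N)))) := by
  -- the abscissa at which the two bounds coincide
  set r : ℝ := (B / A) ^ (1 / N) with hr_def
  have hr : 0 < r := by positivity
  have hcross : B * r ^ (-N) = A := by
    rw [hr_def, ← Real.rpow_mul (by positivity), mul_neg, one_div_mul_cancel hN.ne',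
      Real.rpow_neg_one]
    field_simp
  have hvalue : A * r ^ (1 - c) = A ^ ((N + c - 1) / N) * B ^ ((1 - c) / N) := by
    have hexp : (N + c - 1) / N = 1 - (1 - c) / N := by field_simp; ring
    rw [hr_def, ← Real.rpow_mul (by positivity), Real.div_rpow hB.le hA.le, hexp,
      Real.rpow_sub hA, Real.rpow_one, one_div_mul_eq_div]
    ring
  have hlarge := setLIntegral_Ioc_le_of_le_mul_rpow hc0 hNc hB.le hr
    fun t ht ↦ hfB t ⟨hr.trans ht.1, ht.2⟩
  rw [hcross] at hlarge
  calc ∫⁻ t in Ioc 0 ρ, f t ≤ (∫⁻ t in Ioc 0 (min r ρ), f t) + ∫⁻ t in Ioc r ρ, f t := by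
        refine (lintegral_mono_set fun t ht ↦ ?_).trans (lintegral_union_le f _ _)
        exact (le_or_gt t r).imp (fun h ↦ ⟨ht.1, le_min h ht.2⟩) fun h ↦ ⟨h, ht.2⟩
    _ ≤ ENNReal.ofReal (ρ ^ c * (A * r ^ (1 - c))) +
          ENNReal.ofReal (1 / (N + c - 1) * (ρ ^ c * (A * r ^ (1 - c)))) :=
        add_le_add (setLIntegral_Ioc_min_le_of_le hc0 hc1 hA.le hr hρ hfA) hlarge
    _ = _ := by
        have : 0 < N + c - 1 := by linarith
        rw [← ENNReal.ofReal_add (by positivity) (by positivity), hvalue]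
        congr 1
        ring

variable {E F : Type*} [NormedAddCommGroup E] [NormedSpace ℝ E]
  [NormedAddCommGroup F] [NormedSpace ℝ F] {P : E →L[ℝ] F}

lemma enorm_rpow_eq_ofReal {G : Type*} [NormedAddCommGroup G] {y : G} (hy : y ≠ 0) (r : ℝ) :
    ‖y‖ₑ ^ r = ENNReal.ofReal (‖y‖ ^ r) := by
  rw [← ofReal_norm, ENNReal.ofReal_rpow_of_pos (norm_pos_iff.2 hy)]

lemma rpow_le_rpow_abs_mul_rpow {a b k : ℝ} (ha : 0 < a) (hb : 0 < b) (hab : a ≤ k * b)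
    (hba : b ≤ k * a) (r : ℝ) : a ^ r ≤ k ^ |r| * b ^ r := by
  have hk : 0 ≤ k := by
    by_contra! h
    nlinarith
  rcases le_total 0 r with hr | hr
  · rw [abs_of_nonneg hr, ← Real.mul_rpow hk hb.le]
    exact Real.rpow_le_rpow ha.le hab hr
  · have h : b ^ (-r) ≤ (k * a) ^ (-r) := Real.rpow_le_rpow hb.le hba (neg_nonneg.2 hr)
    rw [Real.mul_rpow hk ha.le, Real.rpow_neg hb.le, Real.rpow_neg ha.le] at h
    rw [abs_of_nonpos hr]
    have := Real.rpow_pos_of_pos ha r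
    have := Real.rpow_pos_of_pos hb r
    field_simp at h
    linarith

lemma enorm_le_lintegral_ray {G : Type*} [NormedAddCommGroup G] [NormedSpace ℝ G]
    {v : E → G} (hv : ContDiff ℝ 1 v) (hcs : HasCompactSupport v) (x : E) {z : E} (hz : z ≠ 0) :
    ‖v x‖ₑ ≤ ∫⁻ t in Ioi (0 : ℝ), ‖z‖ₑ * ‖fderiv ℝ v (x + t • z)‖ₑ := by
  set f : ℝ → G := fun t ↦ v (x - t • z)
  have hf : ContDiff ℝ 1 f := by fun_prop
  have hembed : Topology.IsClosedEmbedding fun t : ℝ ↦ x - t • z :=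
    (Homeomorph.subLeft x).isClosedEmbedding.comp (isClosedEmbedding_smul_left hz)
  have hderiv : ∀ t, ‖deriv f t‖ₑ ≤ ‖z‖ₑ * ‖fderiv ℝ v (x + -t • z)‖ₑ := fun t ↦ by
    have hline : HasDerivAt (fun t : ℝ ↦ x - t • z) (-z) t := by
      simpa using ((hasDerivAt_id t).smul_const z).const_sub x
    have hcomp : HasDerivAt f (fderiv ℝ v (x - t • z) (-z)) t :=
      ((hv.differentiable one_ne_zero) _).hasFDerivAt.comp_hasDerivAt t hline
    rw [hcomp.deriv, mul_comm, neg_smul, ← sub_eq_add_neg, ← enorm_neg z]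
    exact ContinuousLinearMap.le_opENorm _ _
  calc ‖v x‖ₑ = ‖f 0‖ₑ := by simp [f]
    _ ≤ ∫⁻ t in Iic (0 : ℝ), ‖deriv f t‖ₑ :=
        (hcs.comp_isClosedEmbedding hembed).enorm_le_lintegral_Ici_deriv hf 0
    _ ≤ ∫⁻ t in Iic (0 : ℝ), ‖z‖ₑ * ‖fderiv ℝ v (x + -t • z)‖ₑ := lintegral_mono hderiv
    _ = ∫⁻ t in Ioi (0 : ℝ), ‖z‖ₑ * ‖fderiv ℝ v (x + t • z)‖ₑ := by
        rw [Measure.restrict_congr_set Ioi_ae_eq_Ici,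
          ← (Measure.measurePreserving_neg volume).setLIntegral_comp_preimage_emb
            (MeasurableEquiv.neg ℝ).measurableEmbedding _ (Ici 0)]
        simp

lemma exists_norm_map_add_smul_eq [FiniteDimensional ℝ E] [Nontrivial F]
    (hP : Function.Surjective P) :
    ∃ M : ℝ, 0 < M ∧ ∀ x, ∃ e, ‖e‖ ≤ M ∧ ∀ t : ℝ, 0 ≤ t → ‖P (x + t • e)‖ = ‖P x‖ + t := by
  have : FiniteDimensional ℝ F := FiniteDimensional.of_surjective P.toLinearMap hP
  obtain ⟨M, hM, hlift⟩ := P.exists_preimage_norm_le hP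
  refine ⟨M, hM, fun x ↦ ?_⟩
  obtain ⟨w, hw, hxw⟩ : ∃ w : F, ‖w‖ = 1 ∧ ‖P x‖ • w = P x := by
    rcases eq_or_ne (P x) 0 with hx | hx
    · obtain ⟨w, hw⟩ := exists_norm_eq F zero_le_one
      exact ⟨w, hw, by rw [hx, norm_zero, zero_smul]⟩
    · exact ⟨‖P x‖⁻¹ • P x, norm_smul_inv_norm hx, smul_inv_smul₀ (norm_ne_zero_iff.2 hx) _⟩
  obtain ⟨e, he, heM⟩ := hlift w
  refine ⟨e, by rwa [hw, mul_one] at heM, fun t ht ↦ ?_⟩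
  rw [map_add, map_smul, he]
  nth_rw 1 [← hxw]
  rw [← add_smul, norm_smul, hw, mul_one, Real.norm_of_nonneg (by positivity)]

lemma exists_ball_le_norm_map_add_smul [FiniteDimensional ℝ E] [Nontrivial F]
    (hP : Function.Surjective P) :
    ∃ κ δ : ℝ, 0 < κ ∧ 0 < δ ∧ ∀ x, ∃ e, ∀ z ∈ ball e δ,
      ‖z‖ < κ ∧ ∀ t : ℝ, 0 ≤ t → t ≤ 2 * ‖P (x + t • z)‖ := by
  obtain ⟨M, hM, hdir⟩ := exists_norm_map_add_smul_eq hP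
  set δ : ℝ := (2 * (‖P‖ + 1))⁻¹
  have hδ : 0 < δ := by positivity
  have hPδ : ‖P‖ * δ ≤ 1 / 2 := by
    rw [← div_eq_mul_inv, div_le_iff₀ (by positivity)]
    linarith
  refine ⟨M + δ, δ, by positivity, hδ, fun x ↦ ?_⟩
  obtain ⟨e, heM, he⟩ := hdir x
  refine ⟨e, fun z hz ↦ ?_⟩
  rw [mem_ball_iff_norm] at hz
  refine ⟨by linarith [norm_le_norm_add_norm_sub' z e], fun t ht ↦ ?_⟩
  have hdiff : ‖P (x + t • e) - P (x + t • z)‖ ≤ t * (1 / 2) := by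
    rw [← map_sub, add_sub_add_left_eq_sub, ← smul_sub, map_smul, norm_smul,
      Real.norm_of_nonneg ht]
    gcongr
    exact (P.le_opNorm_of_le (by rw [norm_sub_rev]; exact hz.le)).trans hPδ
  linarith [norm_sub_norm_le (P (x + t • e)) (P (x + t • z)), he t ht, norm_nonneg (P x)]

/-- The indicator of the truncated cone `{(y, t) | dist x y < κ * t, t ≤ 2 * ‖P y‖}` with apex `x`,
divided by the volume scale `t ^ dim E` of its slices, as a function of `((x, y), t)`. The condition
`t ≤ 2 * ‖P y‖` keeps the cone away from `ker P`. -/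
def coneDensity (P : E →L[ℝ] F) (κ : ℝ) : (E × E) × ℝ → ℝ≥0∞ :=
  {w | dist w.1.1 w.1.2 < κ * w.2 ∧ w.2 ≤ 2 * ‖P w.1.2‖}.indicator
    fun w ↦ ENNReal.ofReal (w.2 ^ finrank ℝ E)⁻¹

/-- The kernel obtained by integrating `coneDensity` over the height `t`. Convolution of `‖∇v‖` with
it dominates `v`, and it plays the role of the Riesz kernel `dist x y ^ (1 - dim E)`. -/
def coneKernel (P : E →L[ℝ] F) (κ : ℝ) (x y : E) : ℝ≥0∞ :=
  ∫⁻ t, coneDensity P κ ((x, y), t)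

lemma coneDensity_eq_indicator_ball {κ : ℝ} (hκ : 0 < κ) (x y : E) (t : ℝ) :
    coneDensity P κ ((x, y), t) = (Ioc 0 (2 * ‖P y‖)).indicator (fun t ↦
      (ball y (κ * t)).indicator (fun _ ↦ ENNReal.ofReal (t ^ finrank ℝ E)⁻¹) x) t := by
  have hpos : dist x y < κ * t → 0 < t := fun h ↦
    pos_of_mul_pos_right (dist_nonneg.trans_lt h) hκ.le
  simp only [coneDensity, indicator, mem_ofPred_eq, mem_Ioc, mem_ball]
  split_ifs <;> tauto

/-- The measure `‖P x‖ ^ r dμ(x)`, with a power weight in the variables seen by `P` only. For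
`P (x, x̂) = x̂` this is `|x̂| ^ r dx dx̂`. The weight is `ℝ≥0∞`-valued: for `r < 0` it is `∞` on
`ker P`. -/
def normWeight [MeasurableSpace E] (μ : Measure E) (P : E →L[ℝ] F) (r : ℝ) : Measure E :=
  μ.withDensity fun x ↦ ‖P x‖ₑ ^ r

section normWeight

variable [MeasurableSpace E] {μ : Measure E}

instance [SFinite μ] (r : ℝ) : SFinite (normWeight μ P r) :=
  inferInstanceAs (SFinite (μ.withDensity _))

variable [BorelSpace E]

lemma measurable_enorm_clm_rpow (P : E →L[ℝ] F) (r : ℝ) : Measurable fun x ↦ ‖P x‖ₑ ^ r :=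
  P.continuous.enorm.measurable.pow_const r

lemma lintegral_normWeight (r : ℝ) {f : E → ℝ≥0∞} (hf : Measurable f) :
    ∫⁻ x, f x ∂normWeight μ P r = ∫⁻ x, ‖P x‖ₑ ^ r * f x ∂μ :=
  lintegral_withDensity_eq_lintegral_mul _ (measurable_enorm_clm_rpow P r) hf

variable [FiniteDimensional ℝ E] [μ.IsAddHaarMeasure]

lemma ae_clm_ne_zero [Nontrivial F] (hP : Function.Surjective P) : ∀ᵐ x ∂μ, P x ≠ 0 := by
  have hker : P.ker ≠ ⊤ := fun h ↦ by
    obtain ⟨y, hy⟩ := exists_ne (0 : F)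
    obtain ⟨x, rfl⟩ := hP y
    exact hy (LinearMap.mem_ker.1 (h ▸ Submodule.mem_top : x ∈ P.ker))
  exact ae_iff.2 (by
    simp only [not_not]
    exact Measure.addHaar_submodule μ P.ker hker)

lemma ofReal_pow_mul_lintegral_comp_add_smul (x : E) {t : ℝ} (ht : 0 < t) {φ : E → ℝ≥0∞}
    (hφ : Measurable φ) :
    ENNReal.ofReal (t ^ finrank ℝ E) * ∫⁻ z, φ (x + t • z) ∂μ = ∫⁻ y, φ y ∂μ := by
  have hmap : ∫⁻ z, φ (x + t • z) ∂μ = ∫⁻ w, φ (x + w) ∂μ.map (t • ·) := by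
    rw [lintegral_map (by fun_prop) (by fun_prop)]
  rw [hmap, Measure.map_addHaar_smul _ ht.ne', lintegral_smul_measure, lintegral_add_left_eq_self,
    abs_of_pos (by positivity), smul_eq_mul, ← mul_assoc, ← ENNReal.ofReal_mul (by positivity),
    mul_inv_cancel₀ (by positivity), ENNReal.ofReal_one, one_mul]

lemma normWeight_ball_of_map_eq_zero {a : E} (ha : P a = 0) {ρ : ℝ} (hρ : 0 < ρ) (r : ℝ) :
    normWeight μ P r (ball a ρ) =
      ENNReal.ofReal (ρ ^ finrank ℝ E * ρ ^ r) * normWeight μ P r (ball 0 1) := by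
  have hscale : ∀ z, (ball a ρ).indicator (fun x ↦ ‖P x‖ₑ ^ r) (a + ρ • z) =
      ENNReal.ofReal (ρ ^ r) * (ball 0 1).indicator (fun x ↦ ‖P x‖ₑ ^ r) z := fun z ↦ by
    have hmem : a + ρ • z ∈ ball a ρ ↔ z ∈ ball (0 : E) 1 := by
      simp [norm_smul, abs_of_pos hρ, hρ]
    by_cases hz : z ∈ ball (0 : E) 1
    · rw [indicator_of_mem hz, indicator_of_mem (hmem.2 hz), map_add, ha, zero_add, map_smul,
        enorm_smul, ENNReal.mul_rpow_of_ne_top enorm_ne_top enorm_ne_top,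
        enorm_rpow_eq_ofReal hρ.ne', Real.norm_of_nonneg hρ.le]
    · rw [indicator_of_notMem hz, indicator_of_notMem (mt hmem.1 hz), mul_zero]
  have hchange := ofReal_pow_mul_lintegral_comp_add_smul (μ := μ) a hρ
    ((measurable_enorm_clm_rpow P r).indicator (measurableSet_ball (x := a) (ε := ρ)))
  simp_rw [hscale] at hchange
  rw [lintegral_const_mul' _ _ ENNReal.ofReal_ne_top, lintegral_indicator measurableSet_ball,
    lintegral_indicator measurableSet_ball] at hchange
  rw [normWeight, withDensity_apply _ measurableSet_ball, withDensity_apply _ measurableSet_ball,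
    ENNReal.ofReal_mul (by positivity), mul_assoc, hchange]

lemma setLIntegral_enorm_rpow_ball_lt_top [Nontrivial E] {r : ℝ} (hr : -(finrank ℝ E : ℝ) < r)
    (R : ℝ) : ∫⁻ x in ball 0 R, ‖x‖ₑ ^ r ∂μ < ∞ := by
  have hint : IntegrableOn (fun x : E ↦ ‖x‖ ^ r) (ball 0 R) μ :=
    integrableOn_ball_of_norm_le_rpow (C := 1) (α := -r) finrank_pos (by linarith)
      (.of_forall fun x ↦ by
        rw [neg_neg, one_mul, Real.norm_of_nonneg (Real.rpow_nonneg (norm_nonneg x) r)])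
      (measurable_norm.pow_const r).aestronglyMeasurable
  refine lt_of_eq_of_lt (setLIntegral_congr_fun_ae measurableSet_ball ?_) hint.2
  filter_upwards [Measure.ae_ne μ 0] with x hx _
  rw [enorm_rpow_eq_ofReal hx, Real.enorm_of_nonneg (by positivity)]

lemma normWeight_ball_zero_lt_top [Nontrivial F] (hP : Function.Surjective P) {r : ℝ}
    (hr : -(finrank ℝ F : ℝ) < r) (R : ℝ) : normWeight μ P r (ball 0 R) < ∞ := by
  have : FiniteDimensional ℝ F := FiniteDimensional.of_surjective P.toLinearMap hP
  let : MeasurableSpace F := borel F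
  have : BorelSpace F := ⟨rfl⟩
  obtain ⟨g, hg⟩ := P.exists_rightInverse_of_surjective (LinearMap.range_eq_top.2 hP)
  let e : E ≃L[ℝ] F × P.ker := .equivOfRightInverse P g fun y ↦ DFunLike.congr_fun hg y
  let ν : Measure (F × P.ker) := Measure.addHaar.prod Measure.addHaar
  have : (μ.map e).IsAddHaarMeasure := e.isAddHaarMeasure_map μ
  obtain ⟨c, hc⟩ : ∃ c : ℝ≥0, μ.map e = c • ν := ⟨_, Measure.isAddLeftInvariant_eq_smul _ ν⟩
  obtain ⟨R', hR'⟩ := ((isCompact_closedBall (0 : E) R).image e.continuous).isBounded.subset_ball 0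
  have hprod : ball 0 R ⊆ e ⁻¹' (ball 0 R' ×ˢ ball 0 R') := fun x hx ↦ by
    rw [mem_preimage, ball_prod_same]
    exact hR' (mem_image_of_mem e (ball_subset_closedBall hx))
  have hmeas : Measurable fun z : F × P.ker ↦ ‖z.1‖ₑ ^ r :=
    measurable_fst.enorm.pow_const r
  calc normWeight μ P r (ball 0 R)
      ≤ ∫⁻ x in e ⁻¹' (ball 0 R' ×ˢ ball 0 R'), ‖(e x).1‖ₑ ^ r ∂μ := by
        rw [normWeight, withDensity_apply _ measurableSet_ball]
        exact lintegral_mono_set hprod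
    _ = c * ∫⁻ z in ball 0 R' ×ˢ ball 0 R', ‖z.1‖ₑ ^ r ∂ν := by
        rw [← setLIntegral_map (measurableSet_ball.prod measurableSet_ball) hmeas
          e.continuous.measurable, hc, Measure.restrict_smul, lintegral_smul_measure,
          ENNReal.smul_def, smul_eq_mul]
    _ = c * ((∫⁻ y in ball (0 : F) R', ‖y‖ₑ ^ r ∂Measure.addHaar) *
          Measure.addHaar (ball (0 : P.ker) R')) := by
        rw [← Measure.prod_restrict, lintegral_prod _ hmeas.aemeasurable]
        simp_rw [lintegral_const, Measure.restrict_apply_univ]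
        rw [lintegral_mul_const _ (measurable_enorm.pow_const r)]
    _ < ∞ := ENNReal.mul_lt_top ENNReal.coe_lt_top
        (ENNReal.mul_lt_top (setLIntegral_enorm_rpow_ball_lt_top hr R') measure_ball_lt_top)

lemma normWeight_ball_le_of_two_mul_le (r : ℝ) {y : E} {t : ℝ} (ht : 0 < t)
    (hty : 2 * ‖P‖ * t ≤ ‖P y‖) (hy : P y ≠ 0) :
    normWeight μ P r (ball y t) ≤
      ENNReal.ofReal (2 ^ |r|) * μ (ball 0 1) * ENNReal.ofReal (t ^ finrank ℝ E) * ‖P y‖ₑ ^ r := by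
  have hweight : ∀ x ∈ ball y t, ‖P x‖ₑ ^ r ≤ ENNReal.ofReal (2 ^ |r|) * ‖P y‖ₑ ^ r := fun x hx ↦ by
    have hdist : ‖P x - P y‖ ≤ ‖P y‖ / 2 := by
      rw [← map_sub]
      have := P.le_opNorm_of_le (mem_ball_iff_norm.1 hx).le
      linarith
    have hpos := norm_pos_iff.2 hy
    have hlow := norm_sub_norm_le (P y) (P x)
    have hup := norm_sub_norm_le (P x) (P y)
    rw [norm_sub_rev] at hlow
    have hx0 : P x ≠ 0 := norm_pos_iff.1 (by linarith)
    rw [enorm_rpow_eq_ofReal hx0, enorm_rpow_eq_ofReal hy, ← ENNReal.ofReal_mul (by positivity)]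
    exact ENNReal.ofReal_le_ofReal (rpow_le_rpow_abs_mul_rpow (norm_pos_iff.2 hx0) hpos
      (by linarith) (by linarith) r)
  calc normWeight μ P r (ball y t)
      ≤ ∫⁻ _ in ball y t, ENNReal.ofReal (2 ^ |r|) * ‖P y‖ₑ ^ r ∂μ := by
        rw [normWeight, withDensity_apply _ measurableSet_ball]
        exact setLIntegral_mono' measurableSet_ball hweight
    _ = _ := by
        rw [setLIntegral_const, Measure.addHaar_ball_of_pos μ y ht]
        ring

lemma exists_normWeight_ball_le_of_norm_le_mul [Nontrivial F] (μ : Measure E)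
    [μ.IsAddHaarMeasure] (hP : Function.Surjective P) {r : ℝ} (hr : -(finrank ℝ F : ℝ) < r)
    {k : ℝ} (hk : 0 ≤ k) (K : ℝ) :
    ∃ C : ℝ≥0, ∀ y t, 0 < t → ‖P y‖ ≤ k * t → t ≤ K * ‖P y‖ →
      normWeight μ P r (ball y t) ≤ C * ENNReal.ofReal (t ^ finrank ℝ E) * ‖P y‖ₑ ^ r := by
  have : FiniteDimensional ℝ F := FiniteDimensional.of_surjective P.toLinearMap hP
  obtain ⟨κ, hκ, hlift⟩ := P.exists_preimage_norm_le hP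
  lift normWeight μ P r (ball 0 1) to ℝ≥0 using (normWeight_ball_zero_lt_top hP hr 1).ne with V hV
  have hℓ : 1 ≤ 1 + κ * k := le_add_of_nonneg_right (by positivity)
  set ℓ : ℝ := 1 + κ * k with hℓ_def
  set M : ℝ := max k (ℓ * K)
  have : 0 ≤ M := hk.trans (le_max_left _ _)
  refine ⟨(ℓ ^ finrank ℝ E * M ^ |r|).toNNReal * V, fun y t ht hyk hyK ↦ ?_⟩
  have hy : 0 < ‖P y‖ := (norm_nonneg _).lt_of_ne' fun h ↦ by
    rw [h, mul_zero] at hyK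
    exact ht.not_ge hyK
  obtain ⟨z, hz, hzy⟩ := hlift (P y)
  have hsub : ball y t ⊆ ball (y - z) (ℓ * t) := ball_subset_ball' (by
    rw [dist_eq_norm, _root_.sub_sub_cancel, hℓ_def]
    linarith [hzy.trans (mul_le_mul_of_nonneg_left hyk hκ.le)])
  have hpow : (ℓ * t) ^ r ≤ M ^ |r| * ‖P y‖ ^ r := by
    refine rpow_le_rpow_abs_mul_rpow (by positivity) hy ?_ ?_ r
    · calc ℓ * t ≤ ℓ * (K * ‖P y‖) := by gcongr
        _ = ℓ * K * ‖P y‖ := by ring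
        _ ≤ M * ‖P y‖ := by gcongr; exact le_max_right _ _
    · calc ‖P y‖ ≤ k * t := hyk
        _ ≤ M * (ℓ * t) := by gcongr; exacts [le_max_left _ _, le_mul_of_one_le_left ht.le hℓ]
  calc normWeight μ P r (ball y t) ≤ normWeight μ P r (ball (y - z) (ℓ * t)) := measure_mono hsub
    _ = ENNReal.ofReal ((ℓ * t) ^ finrank ℝ E * (ℓ * t) ^ r) * V := by
        rw [normWeight_ball_of_map_eq_zero (by rw [map_sub, hz, sub_self]) (by positivity), hV]
    _ ≤ ENNReal.ofReal ((ℓ * t) ^ finrank ℝ E * (M ^ |r| * ‖P y‖ ^ r)) * V := by gcongr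
    _ = ENNReal.ofReal (ℓ ^ finrank ℝ E * M ^ |r| * t ^ finrank ℝ E * ‖P y‖ ^ r) * V := by ring_nf
    _ = _ := by
        rw [enorm_rpow_eq_ofReal (norm_pos_iff.1 hy), ENNReal.ofReal_mul (by positivity),
          ENNReal.ofReal_mul (by positivity), ENNReal.coe_mul, ENNReal.ofNNReal_toNNReal]
        ring

lemma exists_normWeight_ball_le [Nontrivial F] (μ : Measure E) [μ.IsAddHaarMeasure]
    (hP : Function.Surjective P) {r : ℝ} (hr : -(finrank ℝ F : ℝ) < r) (K : ℝ) :
    ∃ C : ℝ≥0, ∀ y t, 0 < t → t ≤ K * ‖P y‖ →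
      normWeight μ P r (ball y t) ≤ C * ENNReal.ofReal (t ^ finrank ℝ E) * ‖P y‖ₑ ^ r := by
  obtain ⟨C, hC⟩ := exists_normWeight_ball_le_of_norm_le_mul μ hP hr
    (k := 2 * ‖P‖) (by positivity) K
  lift μ (ball 0 1) to ℝ≥0 using measure_ball_lt_top.ne with V hV
  refine ⟨max C (((2 : ℝ) ^ |r|).toNNReal * V), fun y t ht hyK ↦ ?_⟩
  have hy : P y ≠ 0 := fun h ↦ by
    rw [h, norm_zero, mul_zero] at hyK
    exact ht.not_ge hyK
  rcases le_total ‖P y‖ (2 * ‖P‖ * t) with hfar | hnear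
  · exact (hC y t ht hfar hyK).trans (by gcongr; exact le_max_left _ _)
  · refine (normWeight_ball_le_of_two_mul_le r ht hnear hy).trans ?_
    rw [← hV, ← ENNReal.ofNNReal_toNNReal, ← ENNReal.coe_mul]
    gcongr
    exact le_max_right _ _

end normWeight

section coneKernel

variable [FiniteDimensional ℝ E] [MeasurableSpace E] [BorelSpace E] {μ : Measure E}
  [μ.IsAddHaarMeasure]

lemma measurable_coneDensity (P : E →L[ℝ] F) (κ : ℝ) : Measurable (coneDensity P κ) := by
  have hP : Measurable fun w : (E × E) × ℝ ↦ ‖P w.1.2‖ := by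
    exact (Continuous.norm (by fun_prop)).measurable
  refine Measurable.indicator (by fun_prop) (.inter ?_ ?_)
  · exact measurableSet_lt (f := fun w : (E × E) × ℝ ↦ dist w.1.1 w.1.2) (by fun_prop) (by fun_prop)
  · exact measurableSet_le (f := fun w : (E × E) × ℝ ↦ w.2) (by fun_prop) (by fun_prop)

lemma measurable_coneKernel (P : E →L[ℝ] F) (κ : ℝ) :
    Measurable fun w : E × E ↦ coneKernel P κ w.1 w.2 :=
  (measurable_coneDensity P κ).lintegral_prod_right'

lemma setLIntegral_comp_add_smul_le_lintegral_coneDensity {κ t : ℝ} (ht : 0 < t) {x : E} {B : Set E}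
    (hB : MeasurableSet B) (hcone : ∀ z ∈ B, ‖z‖ < κ ∧ t ≤ 2 * ‖P (x + t • z)‖) {g : E → ℝ≥0∞}
    (hg : Measurable g) :
    ∫⁻ z in B, g (x + t • z) ∂μ ≤ ∫⁻ y, coneDensity P κ ((x, y), t) * g y ∂μ := by
  set τ : ℝ := t ^ finrank ℝ E with hτ_def
  have hτ : 0 < τ := by positivity
  have hmem : ∀ z ∈ B, coneDensity P κ ((x, x + t • z), t) = ENNReal.ofReal τ⁻¹ := fun z hz ↦ by
    have hdist : dist x (x + t • z) < κ * t := by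
      rw [dist_self_add_right, norm_smul, Real.norm_of_nonneg ht.le, mul_comm]
      exact mul_lt_mul_of_pos_right (hcone z hz).1 ht
    simp only [coneDensity, indicator, mem_ofPred_eq, hdist, (hcone z hz).2, and_self, if_true,
      hτ_def]
  calc ∫⁻ z in B, g (x + t • z) ∂μ
      = ENNReal.ofReal τ * ∫⁻ z in B, ENNReal.ofReal τ⁻¹ * g (x + t • z) ∂μ := by
        rw [lintegral_const_mul' _ _ ENNReal.ofReal_ne_top, ← mul_assoc,
          ← ENNReal.ofReal_mul hτ.le, mul_inv_cancel₀ hτ.ne', ENNReal.ofReal_one, one_mul]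
    _ = ENNReal.ofReal τ *
          ∫⁻ z in B, coneDensity P κ ((x, x + t • z), t) * g (x + t • z) ∂μ := by
        congr 1
        exact setLIntegral_congr_fun hB fun z hz ↦ by rw [hmem z hz]
    _ ≤ ENNReal.ofReal τ * ∫⁻ z, coneDensity P κ ((x, x + t • z), t) * g (x + t • z) ∂μ := by
        gcongr
        exact Measure.restrict_le_self
    _ = ∫⁻ y, coneDensity P κ ((x, y), t) * g y ∂μ :=
        ofReal_pow_mul_lintegral_comp_add_smul x ht
          (φ := fun y ↦ coneDensity P κ ((x, y), t) * g y)
          (((measurable_coneDensity P κ).comp (by fun_prop)).mul hg)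

lemma setLIntegral_lintegral_coneDensity_mul_le {κ : ℝ} {x : E} {g : E → ℝ≥0∞} (hg : Measurable g)
    (s : Set ℝ) : ∫⁻ t in s, ∫⁻ y, coneDensity P κ ((x, y), t) * g y ∂μ ≤
      ∫⁻ y, coneKernel P κ x y * g y ∂μ := by
  have hmeas : Measurable fun w : E × ℝ ↦ coneDensity P κ ((x, w.1), w.2) :=
    (measurable_coneDensity P κ).comp (by fun_prop)
  calc ∫⁻ t in s, ∫⁻ y, coneDensity P κ ((x, y), t) * g y ∂μ
      ≤ ∫⁻ t, ∫⁻ y, coneDensity P κ ((x, y), t) * g y ∂μ := setLIntegral_le_lintegral _ _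
    _ = ∫⁻ y, ∫⁻ t, coneDensity P κ ((x, y), t) * g y ∂volume ∂μ :=
        (lintegral_lintegral_swap (hmeas.mul (hg.comp measurable_fst)).aemeasurable).symm
    _ = ∫⁻ y, coneKernel P κ x y * g y ∂μ :=
        lintegral_congr fun y ↦ lintegral_mul_const _ (hmeas.comp measurable_prodMk_left)

lemma exists_enorm_le_lintegral_coneKernel [Nontrivial F] (μ : Measure E) [μ.IsAddHaarMeasure]
    (hP : Function.Surjective P) : ∃ κ : ℝ, 0 < κ ∧ ∃ C : ℝ≥0, ∀ v : E → ℝ, ContDiff ℝ 1 v →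
      HasCompactSupport v → ∀ x, ‖v x‖ₑ ≤ C * ∫⁻ y, coneKernel P κ x y * ‖fderiv ℝ v y‖ₑ ∂μ := by
  obtain ⟨κ, δ, hκ, hδ, hcone⟩ := exists_ball_le_norm_map_add_smul hP
  have hV0 : μ (ball 0 δ) ≠ 0 := (measure_ball_pos μ 0 hδ).ne'
  lift μ (ball 0 δ) to ℝ≥0 using measure_ball_lt_top.ne with V hV
  refine ⟨κ, hκ, V⁻¹ * κ.toNNReal, fun v hv hcs x ↦ ?_⟩
  have hg : Measurable fun y ↦ ‖fderiv ℝ v y‖ₑ :=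
    (hv.continuous_fderiv one_ne_zero).enorm.measurable
  set g : E → ℝ≥0∞ := fun y ↦ ‖fderiv ℝ v y‖ₑ
  obtain ⟨e, he⟩ := hcone x
  have hray : ∀ z ∈ ball e δ, ‖v x‖ₑ ≤ κ.toNNReal * ∫⁻ t in Ioi (0 : ℝ), g (x + t • z) :=
    fun z hz ↦ by
      have hz0 : z ≠ 0 := fun h ↦ by
        have := (he z hz).2 (2 * ‖P x‖ + 1) (by positivity)
        rw [h, smul_zero, add_zero] at this
        linarith
      refine (enorm_le_lintegral_ray hv hcs x hz0).trans ?_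
      rw [lintegral_const_mul' _ _ enorm_ne_top]
      gcongr
      rw [← ofReal_norm]
      exact ENNReal.ofReal_le_ofReal (he z hz).1.le
  have haverage : V * ‖v x‖ₑ ≤ κ.toNNReal * ∫⁻ y, coneKernel P κ x y * g y ∂μ := by
    calc V * ‖v x‖ₑ = ∫⁻ _ in ball e δ, ‖v x‖ₑ ∂μ := by
          rw [setLIntegral_const, Measure.addHaar_ball_center, hV, mul_comm]
      _ ≤ ∫⁻ z in ball e δ, κ.toNNReal * ∫⁻ t in Ioi (0 : ℝ), g (x + t • z) ∂volume ∂μ :=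
          setLIntegral_mono' measurableSet_ball hray
      _ = κ.toNNReal * ∫⁻ t in Ioi (0 : ℝ), ∫⁻ z in ball e δ, g (x + t • z) ∂μ := by
          rw [lintegral_const_mul' _ _ ENNReal.coe_ne_top, lintegral_lintegral_swap]
          exact (hg.comp (by fun_prop)).aemeasurable
      _ ≤ κ.toNNReal * ∫⁻ t in Ioi (0 : ℝ), ∫⁻ y, coneDensity P κ ((x, y), t) * g y ∂μ := by
          refine mul_le_mul_right (setLIntegral_mono' measurableSet_Ioi fun t ht ↦ ?_) _
          exact setLIntegral_comp_add_smul_le_lintegral_coneDensity ht measurableSet_ball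
            (fun z hz ↦ ⟨(he z hz).1, (he z hz).2 t (le_of_lt ht)⟩) hg
      _ ≤ κ.toNNReal * ∫⁻ y, coneKernel P κ x y * g y ∂μ := by
          gcongr
          exact setLIntegral_lintegral_coneDensity_mul_le hg _
  rw [ENNReal.coe_mul, ENNReal.coe_inv (by exact_mod_cast hV0), mul_assoc]
  exact (ENNReal.mul_le_iff_le_inv hV0 ENNReal.coe_ne_top).1 haverage

lemma setLIntegral_coneKernel {κ : ℝ} (hκ : 0 < κ) (ν : Measure E) [SFinite ν] (A : Set E) (y : E) :
    ∫⁻ x in A, coneKernel P κ x y ∂ν = ∫⁻ t in Ioc 0 (2 * ‖P y‖),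
      ENNReal.ofReal (t ^ finrank ℝ E)⁻¹ * ν.restrict A (ball y (κ * t)) := by
  have hmeas : Measurable fun w : E × ℝ ↦ coneDensity P κ ((w.1, y), w.2) :=
    (measurable_coneDensity P κ).comp (by fun_prop)
  rw [← lintegral_indicator measurableSet_Ioc]
  refine (lintegral_lintegral_swap hmeas.aemeasurable).trans (lintegral_congr fun t ↦ ?_)
  simp_rw [coneDensity_eq_indicator_ball hκ]
  by_cases ht : t ∈ Ioc 0 (2 * ‖P y‖)
  · simp_rw [indicator_of_mem ht]
    exact lintegral_indicator_const measurableSet_ball _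
  · simp_rw [indicator_of_notMem ht, lintegral_zero]

lemma exists_inv_pow_mul_normWeight_ball_le [Nontrivial F] (μ : Measure E) [μ.IsAddHaarMeasure]
    (hP : Function.Surjective P) {r κ : ℝ} (hr : -(finrank ℝ F : ℝ) < r) (hκ : 0 < κ) :
    ∃ H : ℝ, 0 < H ∧ ∀ y, ∀ t ∈ Ioc 0 (2 * ‖P y‖),
      ENNReal.ofReal (t ^ finrank ℝ E)⁻¹ * normWeight μ P r (ball y (κ * t)) ≤
        ENNReal.ofReal (H * ‖P y‖ ^ r) := by
  obtain ⟨C, hC⟩ := exists_normWeight_ball_le μ hP hr (2 * κ)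
  refine ⟨(C + 1) * κ ^ finrank ℝ E, by positivity, fun y t ht ↦ ?_⟩
  have ht0 : 0 < t := ht.1
  have hy : 0 < ‖P y‖ := by linarith [ht.2]
  have hball := hC y (κ * t) (by positivity) (by nlinarith only [ht.2, hκ])
  rw [← ENNReal.ofReal_coe_nnreal, enorm_rpow_eq_ofReal (norm_pos_iff.1 hy),
    ← ENNReal.ofReal_mul (by positivity), ← ENNReal.ofReal_mul (by positivity)] at hball
  refine (mul_le_mul_right hball _).trans ?_
  rw [← ENNReal.ofReal_mul (by positivity), mul_pow]
  refine ENNReal.ofReal_le_ofReal ?_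
  calc _ = C * κ ^ finrank ℝ E * ‖P y‖ ^ r := by field_simp
    _ ≤ (C + 1) * κ ^ finrank ℝ E * ‖P y‖ ^ r := by gcongr; linarith

lemma exists_setLIntegral_coneKernel_le [Nontrivial F] (μ : Measure E) [μ.IsAddHaarMeasure]
    (hP : Function.Surjective P) {r c κ : ℝ} (hr : -(finrank ℝ F : ℝ) < r) (hκ : 0 < κ)
    (hc0 : 0 ≤ c) (hc1 : c ≤ 1) (hNc : 1 < finrank ℝ E + c) :
    ∃ C : ℝ≥0, ∀ A : Set E, normWeight μ P r A ≠ ∞ → ∀ y, P y ≠ 0 →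
      ∫⁻ x in A, coneKernel P κ x y ∂normWeight μ P r ≤
        C * normWeight μ P r A ^ ((1 - c) / finrank ℝ E) *
          ‖P y‖ₑ ^ (c + r * ((finrank ℝ E + c - 1) / finrank ℝ E)) := by
  have : Nontrivial E := hP.nontrivial
  have hN : 0 < (finrank ℝ E : ℝ) := by exact_mod_cast finrank_pos
  have : 0 < finrank ℝ E + c - 1 := by linarith
  obtain ⟨H, hH, hsmall⟩ := exists_inv_pow_mul_normWeight_ball_le μ hP hr hκ
  set d : ℝ := (finrank ℝ E + c - 1) / finrank ℝ E with hd
  refine ⟨((1 + 1 / (finrank ℝ E + c - 1)) * (2 ^ c * H ^ d)).toNNReal, fun A hA y hy ↦ ?_⟩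
  rcases eq_or_ne (normWeight μ P r A) 0 with hA0 | hA0
  · rw [Measure.restrict_eq_zero.2 hA0, lintegral_zero_measure]
    exact zero_le
  have hy' : 0 < ‖P y‖ := norm_pos_iff.2 hy
  set B : ℝ := (normWeight μ P r A).toReal
  have hB : 0 < B := ENNReal.toReal_pos hA0 hA
  have hBA : normWeight μ P r A = ENNReal.ofReal B := (ENNReal.ofReal_toReal hA).symm
  have hlarge : ∀ t ∈ Ioc 0 (2 * ‖P y‖), ENNReal.ofReal (t ^ finrank ℝ E)⁻¹ *
      (normWeight μ P r).restrict A (ball y (κ * t)) ≤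
        ENNReal.ofReal (B * t ^ (-(finrank ℝ E : ℝ))) := fun t ht ↦ by
    rw [mul_comm B, Real.rpow_neg ht.1.le, Real.rpow_natCast,
      ENNReal.ofReal_mul (inv_nonneg.2 (pow_nonneg ht.1.le _)), ← hBA]
    exact mul_le_mul_right
      ((measure_mono (subset_univ _)).trans_eq (Measure.restrict_apply_univ A)) _
  rw [setLIntegral_coneKernel hκ, hBA]
  refine (setLIntegral_Ioc_le_of_le_of_le_mul_rpow hN hc0 hc1 hNc (by positivity) hB
    (by positivity) (fun t ht ↦ (mul_le_mul_right (Measure.restrict_le_self _) _).trans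
      (hsmall y t ht)) hlarge).trans_eq ?_
  rw [← hd, Real.mul_rpow two_pos.le hy'.le, Real.mul_rpow hH.le (by positivity),
    ← Real.rpow_mul hy'.le, enorm_rpow_eq_ofReal hy, Real.rpow_add hy',
    ENNReal.ofReal_rpow_of_pos hB, ← ENNReal.ofReal_coe_nnreal, Real.coe_toNNReal _ (by positivity),
    ← ENNReal.ofReal_mul (by positivity), ← ENNReal.ofReal_mul (by positivity)]
  congr 1
  ring

end coneKernel

lemma rpow_le_of_rpow_add_le {a b : ℝ≥0∞} {s t : ℝ} (ha : a ≠ ∞) (hs : 0 < s) (ht : 0 ≤ t)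
    (hab : a ^ (s + t) ≤ b * a ^ t) : a ^ s ≤ b := by
  rcases eq_or_ne a 0 with rfl | ha0
  · simp [hs]
  rw [ENNReal.rpow_add _ _ ha0 ha] at hab
  exact (ENNReal.mul_le_mul_iff_left (by simp [ENNReal.rpow_eq_zero_iff, ha0, ha])
    (ENNReal.rpow_ne_top_of_nonneg ht ha)).1 hab

section levelSet

variable [FiniteDimensional ℝ E] [MeasurableSpace E] [BorelSpace E]

lemma normWeight_lt_top_of_hasCompactSupport {μ : Measure E} [μ.IsAddHaarMeasure] [Nontrivial F]
    (hP : Function.Surjective P) {r : ℝ} (hr : -(finrank ℝ F : ℝ) < r) {G : Type*} [Zero G]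
    {v : E → G} (hcs : HasCompactSupport v) : normWeight μ P r (tsupport v) < ∞ := by
  obtain ⟨R, hR⟩ := hcs.isCompact.isBounded.subset_ball (0 : E)
  exact (measure_mono hR).trans_lt (normWeight_ball_zero_lt_top hP hr R)

lemma exists_setLIntegral_enorm_le [Nontrivial F] (μ : Measure E) [μ.IsAddHaarMeasure]
    (hP : Function.Surjective P) {r c : ℝ} (hr : -(finrank ℝ F : ℝ) < r)
    (hc0 : 0 ≤ c) (hc1 : c ≤ 1) (hNc : 1 < finrank ℝ E + c) :
    ∃ C : ℝ≥0, ∀ v : E → ℝ, ContDiff ℝ 1 v → HasCompactSupport v →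
      ∀ A : Set E, normWeight μ P r A ≠ ∞ →
        ∫⁻ x in A, ‖v x‖ₑ ∂normWeight μ P r ≤
          normWeight μ P r A ^ ((1 - c) / finrank ℝ E) * (C * ∫⁻ y, ‖fderiv ℝ v y‖ₑ
            ∂normWeight μ P (c + r * ((finrank ℝ E + c - 1) / finrank ℝ E))) := by
  obtain ⟨κ, hκ, C₁, hC₁⟩ := exists_enorm_le_lintegral_coneKernel μ hP
  obtain ⟨C₂, hC₂⟩ := exists_setLIntegral_coneKernel_le μ hP hr hκ hc0 hc1 hNc
  refine ⟨C₁ * C₂, fun v hv hcs A hA ↦ ?_⟩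
  have hg : Measurable fun y ↦ ‖fderiv ℝ v y‖ₑ :=
    (hv.continuous_fderiv one_ne_zero).enorm.measurable
  have hker : Measurable fun w : E × E ↦ coneKernel P κ w.1 w.2 := measurable_coneKernel P κ
  set s : ℝ := c + r * ((finrank ℝ E + c - 1) / finrank ℝ E)
  set η : ℝ≥0∞ := normWeight μ P r A ^ ((1 - c) / finrank ℝ E)
  have hη : η ≠ ∞ := ENNReal.rpow_ne_top_of_nonneg (by have := sub_nonneg.2 hc1; positivity) hA
  calc ∫⁻ x in A, ‖v x‖ₑ ∂normWeight μ P r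
      ≤ ∫⁻ x in A, C₁ * ∫⁻ y, coneKernel P κ x y * ‖fderiv ℝ v y‖ₑ ∂μ ∂normWeight μ P r :=
        lintegral_mono (hC₁ v hv hcs)
    _ = C₁ * ∫⁻ y, (∫⁻ x in A, coneKernel P κ x y ∂normWeight μ P r) * ‖fderiv ℝ v y‖ₑ ∂μ := by
        rw [lintegral_const_mul' _ _ ENNReal.coe_ne_top, lintegral_lintegral_swap
          (hker.mul (hg.comp measurable_snd)).aemeasurable]
        congr 1
        exact lintegral_congr fun y ↦ lintegral_mul_const _ (hker.comp measurable_prodMk_right)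
    _ ≤ C₁ * ∫⁻ y, (C₂ * η) * (‖P y‖ₑ ^ s * ‖fderiv ℝ v y‖ₑ) ∂μ := by
        refine mul_le_mul_right (lintegral_mono_ae ?_) _
        filter_upwards [ae_clm_ne_zero hP] with y hy
        rw [← mul_assoc]
        exact mul_le_mul_left (hC₂ A hA y hy) _
    _ = η * ((C₁ * C₂ : ℝ≥0) * ∫⁻ y, ‖fderiv ℝ v y‖ₑ ∂normWeight μ P s) := by
        rw [lintegral_const_mul' _ _ (ENNReal.mul_ne_top ENNReal.coe_ne_top hη),
          lintegral_normWeight _ hg, ENNReal.coe_mul]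
        ring

lemma exists_normWeight_superlevel_rpow_le [Nontrivial F] (μ : Measure E) [μ.IsAddHaarMeasure]
    (hP : Function.Surjective P) {r c d : ℝ} (hr : -(finrank ℝ F : ℝ) < r)
    (hc0 : 0 ≤ c) (hc1 : c ≤ 1) (hd : d = (finrank ℝ E + c - 1) / finrank ℝ E) (hd0 : 0 < d) :
    ∃ C : ℝ≥0, ∀ v : E → ℝ, ContDiff ℝ 1 v → HasCompactSupport v →
      normWeight μ P r {x | 1 ≤ ‖v x‖} ^ d ≤
        C * ∫⁻ y, ‖fderiv ℝ v y‖ₑ ∂normWeight μ P (c + r * d) := by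
  have : Nontrivial E := hP.nontrivial
  have hN : 0 < (finrank ℝ E : ℝ) := by exact_mod_cast finrank_pos
  have hNc : 1 < finrank ℝ E + c := by
    rw [hd, div_pos_iff_of_pos_right hN] at hd0
    linarith
  have hcd : (1 - c) / finrank ℝ E = 1 - d := by rw [hd]; field_simp; ring
  have hd1 : d ≤ 1 := by rw [hd, div_le_one hN]; linarith
  obtain ⟨C, hC⟩ := exists_setLIntegral_enorm_le μ hP hr hc0 hc1 hNc
  rw [← hd, hcd] at hC
  refine ⟨C, fun v hv hcs ↦ ?_⟩
  set A : Set E := {x | 1 ≤ ‖v x‖}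
  have hA : MeasurableSet A := measurableSet_le measurable_const hv.continuous.norm.measurable
  have hsupp : A ⊆ tsupport v := fun x hx ↦ subset_tsupport v fun h0 ↦ by
    have : (1 : ℝ) ≤ ‖v x‖ := hx
    norm_num [h0] at this
  have hfin : normWeight μ P r A ≠ ∞ :=
    ((measure_mono hsupp).trans_lt (normWeight_lt_top_of_hasCompactSupport hP hr hcs)).ne
  refine rpow_le_of_rpow_add_le hfin hd0 (sub_nonneg.2 hd1) ?_
  rw [add_sub_cancel, ENNReal.rpow_one, mul_comm]
  refine le_trans ?_ (hC v hv hcs A hfin)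
  rw [← setLIntegral_one]
  refine setLIntegral_mono' hA fun x hx ↦ ?_
  rw [← ofReal_norm]
  exact ENNReal.one_le_ofReal.2 hx

end levelSet

section truncation

lemma exists_contDiff_truncation : ∃ (Ψ : ℝ → ℝ) (M : ℝ≥0), ContDiff ℝ 1 Ψ ∧ Ψ 0 = 0 ∧
    (∀ r, 2 ≤ ‖r‖ → Ψ r = 1) ∧
    ∀ r, ‖deriv Ψ r‖ₑ ≤ (Ico 1 2).indicator (fun _ ↦ (M : ℝ≥0∞)) ‖r‖ := by
  set Ψ : ℝ → ℝ := fun r ↦ Real.smoothTransition (r ^ 2 - 1)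
  have hΨ : ContDiff ℝ 1 Ψ := Real.smoothTransition.contDiff.comp (by fun_prop)
  have hzero : ∀ r : ℝ, r ^ 2 < 1 → Ψ r = 0 := fun r hr ↦
    Real.smoothTransition.zero_of_nonpos (by linarith)
  have hone : ∀ r : ℝ, 2 < r ^ 2 → Ψ r = 1 := fun r hr ↦
    Real.smoothTransition.one_of_one_le (by linarith)
  have hlarge : ∀ r : ℝ, 2 ≤ ‖r‖ → 2 < r ^ 2 := fun r hr ↦ by
    rw [← sq_abs, ← Real.norm_eq_abs]
    nlinarith
  have hderiv : ∀ r, ‖r‖ ∉ Ico 1 2 → deriv Ψ r = 0 := fun r hr ↦ by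
    rcases lt_or_ge ‖r‖ 1 with h | h
    · have hopen : IsOpen {x : ℝ | x ^ 2 < 1} := isOpen_lt (by fun_prop) (by fun_prop)
      have : Ψ =ᶠ[nhds r] fun _ ↦ 0 :=
        Filter.eventually_of_mem (hopen.mem_nhds ((sq_lt_one_iff_abs_lt_one r).2 h)) hzero
      rw [this.deriv_eq, deriv_const]
    · have hopen : IsOpen {x : ℝ | 2 < x ^ 2} := isOpen_lt (by fun_prop) (by fun_prop)
      have : Ψ =ᶠ[nhds r] fun _ ↦ 1 := Filter.eventually_of_mem
        (hopen.mem_nhds (hlarge r (not_lt.1 fun h' ↦ hr ⟨h, h'⟩))) hone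
      rw [this.deriv_eq, deriv_const]
  obtain ⟨M, hM⟩ := (isCompact_closedBall (0 : ℝ) 2).exists_bound_of_continuousOn
    (hΨ.continuous_deriv le_rfl).continuousOn
  refine ⟨Ψ, M.toNNReal, hΨ, hzero 0 (by norm_num), fun r hr ↦ hone r (hlarge r hr), fun r ↦ ?_⟩
  by_cases hr : ‖r‖ ∈ Ico 1 2
  · rw [indicator_of_mem hr, ← ofReal_norm]
    exact ENNReal.ofReal_le_ofReal (hM r (mem_closedBall_zero_iff.2 hr.2.le))
  · rw [hderiv r hr, enorm_zero]
    exact zero_le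

lemma enorm_fderiv_comp_inv_mul_le {Ψ : ℝ → ℝ} {M : ℝ≥0} (hΨ : Differentiable ℝ Ψ)
    (hM : ∀ r, ‖deriv Ψ r‖ₑ ≤ (Ico 1 2).indicator (fun _ ↦ (M : ℝ≥0∞)) ‖r‖) {v : E → ℝ}
    (hv : Differentiable ℝ v) {s : ℝ} (hs : 0 < s) (y : E) :
    ‖fderiv ℝ (fun x ↦ Ψ (s⁻¹ * v x)) y‖ₑ ≤ M * ENNReal.ofReal s⁻¹ *
      {x | ‖v x‖ ∈ Ico s (2 * s)}.indicator (fun x ↦ ‖fderiv ℝ v x‖ₑ) y := by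
  have hder : HasFDerivAt (fun x ↦ Ψ (s⁻¹ * v x))
      (deriv Ψ (s⁻¹ * v y) • s⁻¹ • fderiv ℝ v y) y :=
    (hΨ _).hasDerivAt.comp_hasFDerivAt y ((hv y).hasFDerivAt.const_mul s⁻¹)
  have hshell : ‖s⁻¹ * v y‖ ∈ Ico 1 2 ↔ y ∈ {x | ‖v x‖ ∈ Ico s (2 * s)} := by
    rw [norm_mul, norm_inv, Real.norm_of_nonneg hs.le, inv_mul_eq_div, mem_Ico, one_le_div hs,
      div_lt_iff₀ hs]
    rfl
  rw [hder.fderiv, enorm_smul, enorm_smul, Real.enorm_of_nonneg (inv_nonneg.2 hs.le)]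
  by_cases hy : y ∈ {x | ‖v x‖ ∈ Ico s (2 * s)}
  · rw [indicator_of_mem hy, mul_assoc]
    gcongr
    simpa only [indicator_of_mem (hshell.2 hy)] using hM (s⁻¹ * v y)
  · have hzero : ‖deriv Ψ (s⁻¹ * v y)‖ₑ ≤ 0 := by
      simpa only [indicator_of_notMem (mt hshell.1 hy)] using hM (s⁻¹ * v y)
    rw [nonpos_iff_eq_zero.1 hzero, zero_mul]
    exact zero_le

lemma tsum_rpow_le_rpow_tsum {ι : Type*} (f : ι → ℝ≥0∞) {q : ℝ} (hq : 1 ≤ q) :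
    ∑' i, f i ^ q ≤ (∑' i, f i) ^ q := by
  have hsplit : ∀ a : ℝ≥0∞, a ^ q = a * a ^ (q - 1) := fun a ↦ by
    nth_rw 2 [← ENNReal.rpow_one a]
    rw [← ENNReal.rpow_add_of_nonneg _ _ zero_le_one (sub_nonneg.2 hq), add_sub_cancel]
  calc ∑' i, f i ^ q = ∑' i, f i * f i ^ (q - 1) := by simp_rw [← hsplit]
    _ ≤ ∑' i, f i * (∑' i, f i) ^ (q - 1) := by
        have := sub_nonneg.2 hq
        gcongr with i
        exact ENNReal.le_tsum i
    _ = (∑' i, f i) ^ q := by rw [ENNReal.tsum_mul_right, ← hsplit]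

section dyadicShell

variable {X G : Type*} [MeasurableSpace X] [NormedAddCommGroup G] [MeasurableSpace G]
  [OpensMeasurableSpace G]

/-- The set where `‖v‖` lies in the dyadic interval `[2 ^ k, 2 ^ (k + 1))`. -/
def dyadicShell (v : X → G) (k : ℤ) : Set X :=
  {x | ‖v x‖ ∈ Ico ((2 : ℝ) ^ k) (2 ^ (k + 1))}

lemma measurableSet_dyadicShell {v : X → G} (hv : Measurable v) (k : ℤ) :
    MeasurableSet (dyadicShell v k) :=
  hv.norm measurableSet_Ico

lemma tsum_setLIntegral_dyadicShell_le (ν : Measure X) {v : X → G} (hv : Measurable v)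
    (f : X → ℝ≥0∞) : ∑' k, ∫⁻ x in dyadicShell v k, f x ∂ν ≤ ∫⁻ x, f x ∂ν := by
  have hdisj : Pairwise (Function.onFun Disjoint (dyadicShell v)) := fun i j hij ↦
    disjoint_left.2 fun x hi hj ↦ hij <| by
      have hij' : i < j + 1 := (zpow_lt_zpow_iff_right₀ _root_.one_lt_two).1 (hi.1.trans_lt hj.2)
      have hji' : j < i + 1 := (zpow_lt_zpow_iff_right₀ _root_.one_lt_two).1 (hj.1.trans_lt hi.2)
      lia
  rw [← lintegral_iUnion (measurableSet_dyadicShell hv) hdisj]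
  exact setLIntegral_le_lintegral _ _

lemma lintegral_enorm_rpow_le_tsum (ν : Measure X) {v : X → G} (hv : Measurable v) {q : ℝ}
    (hq : 0 < q) : ∫⁻ x, ‖v x‖ₑ ^ q ∂ν ≤
      ∑' k : ℤ, ENNReal.ofReal (2 ^ (k + 1)) ^ q * ν {x | 2 ^ k ≤ ‖v x‖} := by
  have hcover : Function.support (fun x ↦ ‖v x‖ₑ ^ q) ⊆ ⋃ k, dyadicShell v k := fun x hx ↦ by
    have hx0 : v x ≠ 0 := fun h ↦ hx (by simp [h, hq])
    exact mem_iUnion.2 (exists_mem_Ico_zpow (norm_pos_iff.2 hx0) one_lt_two)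
  calc ∫⁻ x, ‖v x‖ₑ ^ q ∂ν
      = ∫⁻ x in ⋃ k, dyadicShell v k, ‖v x‖ₑ ^ q ∂ν :=
        (setLIntegral_eq_of_support_subset hcover).symm
    _ ≤ ∑' k, ∫⁻ x in dyadicShell v k, ‖v x‖ₑ ^ q ∂ν := lintegral_iUnion_le _ _
    _ ≤ ∑' k : ℤ, ENNReal.ofReal (2 ^ (k + 1)) ^ q * ν {x | 2 ^ k ≤ ‖v x‖} := by
        refine ENNReal.tsum_le_tsum fun k ↦ ?_
        calc ∫⁻ x in dyadicShell v k, ‖v x‖ₑ ^ q ∂ν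
            ≤ ∫⁻ _ in dyadicShell v k, ENNReal.ofReal (2 ^ (k + 1)) ^ q ∂ν := by
              refine setLIntegral_mono' (measurableSet_dyadicShell hv k) fun x hx ↦ ?_
              rw [← ofReal_norm]
              gcongr
              exact hx.2.le
          _ ≤ ENNReal.ofReal (2 ^ (k + 1)) ^ q * ν {x | 2 ^ k ≤ ‖v x‖} := by
              rw [setLIntegral_const]
              gcongr
              exact fun x hx ↦ hx.1

end dyadicShell

variable [MeasurableSpace E] [BorelSpace E]

lemma exists_superlevel_rpow_le_setLIntegral_shell {ν ξ : Measure E} {d : ℝ} (hd : 0 ≤ d)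
    {C : ℝ≥0} (hweak : ∀ v : E → ℝ, ContDiff ℝ 1 v → HasCompactSupport v →
      ν {x | 1 ≤ ‖v x‖} ^ d ≤ C * ∫⁻ y, ‖fderiv ℝ v y‖ₑ ∂ξ) :
    ∃ M : ℝ≥0, ∀ v : E → ℝ, ContDiff ℝ 1 v → HasCompactSupport v → ∀ s : ℝ, 0 < s →
      ν {x | 2 * s ≤ ‖v x‖} ^ d ≤ ENNReal.ofReal s⁻¹ *
        (M * ∫⁻ y in {x | ‖v x‖ ∈ Ico s (2 * s)}, ‖fderiv ℝ v y‖ₑ ∂ξ) := by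
  obtain ⟨Ψ, M, hΨ, hΨ0, hΨ1, hM⟩ := exists_contDiff_truncation
  refine ⟨C * M, fun v hv hcs s hs ↦ ?_⟩
  set w : E → ℝ := fun x ↦ Ψ (s⁻¹ * v x)
  have hw : ContDiff ℝ 1 w := hΨ.comp (contDiff_const.mul hv)
  have hwcs : HasCompactSupport w := hcs.comp_left (g := fun y ↦ Ψ (s⁻¹ * y)) (by simp [hΨ0])
  have hlevel : {x | 2 * s ≤ ‖v x‖} ⊆ {x | 1 ≤ ‖w x‖} := fun x hx ↦ by
    have hx' : 2 ≤ ‖s⁻¹ * v x‖ := by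
      rw [norm_mul, norm_inv, Real.norm_of_nonneg hs.le, inv_mul_eq_div, le_div_iff₀ hs]
      exact hx
    simp [w, hΨ1 _ hx']
  have hshell : MeasurableSet {x | ‖v x‖ ∈ Ico s (2 * s)} :=
    hv.continuous.norm.measurable measurableSet_Ico
  calc ν {x | 2 * s ≤ ‖v x‖} ^ d ≤ ν {x | 1 ≤ ‖w x‖} ^ d := by gcongr
    _ ≤ C * ∫⁻ y, ‖fderiv ℝ w y‖ₑ ∂ξ := hweak w hw hwcs
    _ ≤ C * ∫⁻ y, M * ENNReal.ofReal s⁻¹ *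
          {x | ‖v x‖ ∈ Ico s (2 * s)}.indicator (fun x ↦ ‖fderiv ℝ v x‖ₑ) y ∂ξ := by
        gcongr with y
        exact enorm_fderiv_comp_inv_mul_le (hΨ.differentiable one_ne_zero) hM
          (hv.differentiable one_ne_zero) hs y
    _ = _ := by
        rw [lintegral_const_mul' _ _ (ENNReal.mul_ne_top ENNReal.coe_ne_top ENNReal.ofReal_ne_top),
          lintegral_indicator hshell, ENNReal.coe_mul]
        ring

lemma ofReal_mul_rpow_mul_le_of_rpow_le {a b : ℝ≥0∞} {d s t : ℝ} (hd : 0 < d) (hs : 0 < s)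
    (ht : 0 ≤ t) (hab : a ^ d ≤ ENNReal.ofReal s⁻¹ * b) :
    ENNReal.ofReal (t * s) ^ (1 / d) * a ≤ (ENNReal.ofReal t * b) ^ (1 / d) := by
  calc ENNReal.ofReal (t * s) ^ (1 / d) * a = (ENNReal.ofReal (t * s) * a ^ d) ^ (1 / d) := by
        rw [ENNReal.mul_rpow_of_nonneg _ _ (by positivity), ← ENNReal.rpow_mul,
          mul_one_div_cancel hd.ne', ENNReal.rpow_one]
    _ ≤ (ENNReal.ofReal (t * s) * (ENNReal.ofReal s⁻¹ * b)) ^ (1 / d) := by gcongr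
    _ = (ENNReal.ofReal t * b) ^ (1 / d) := by
        rw [← mul_assoc, ← ENNReal.ofReal_mul (by positivity), mul_inv_cancel_right₀ hs.ne']

-- The weak-type bound is applied to the truncations of `v` at the dyadic levels `2 ^ k`, whose
-- gradients live on disjoint shells.
lemma exists_lintegral_rpow_le_of_superlevel_rpow_le {ν ξ : Measure E} {d : ℝ} (hd0 : 0 < d)
    (hd1 : d ≤ 1) {C : ℝ≥0} (hweak : ∀ v : E → ℝ, ContDiff ℝ 1 v → HasCompactSupport v →
      ν {x | 1 ≤ ‖v x‖} ^ d ≤ C * ∫⁻ y, ‖fderiv ℝ v y‖ₑ ∂ξ) :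
    ∃ K : ℝ≥0, ∀ v : E → ℝ, ContDiff ℝ 1 v → HasCompactSupport v →
      (∫⁻ x, ‖v x‖ₑ ^ (1 / d) ∂ν) ^ d ≤ K * ∫⁻ y, ‖fderiv ℝ v y‖ₑ ∂ξ := by
  obtain ⟨M, hM⟩ := exists_superlevel_rpow_le_setLIntegral_shell hd0.le hweak
  refine ⟨4 * M, fun v hv hcs ↦ ?_⟩
  have hvm : Measurable v := hv.continuous.measurable
  set I : ℤ → ℝ≥0∞ := fun k ↦ ∫⁻ y in dyadicShell v k, ‖fderiv ℝ v y‖ₑ ∂ξ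
  have hlevel : ∀ k : ℤ, ENNReal.ofReal (2 ^ (k + 1 + 1)) ^ (1 / d) *
      ν {x | 2 ^ (k + 1) ≤ ‖v x‖} ≤ ((4 * M : ℝ≥0) * I k) ^ (1 / d) := fun k ↦ by
    have htwo : (2 : ℝ) ^ (k + 1) = 2 * 2 ^ k := by rw [zpow_add_one₀ two_ne_zero, mul_comm]
    have hfour : (2 : ℝ) ^ (k + 1 + 1) = 4 * 2 ^ k := by
      rw [zpow_add_one₀ two_ne_zero, htwo]
      ring
    have htrunc := hM v hv hcs (2 ^ k) (by positivity)
    rw [← htwo] at htrunc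
    rw [hfour, ENNReal.coe_mul, mul_assoc, ENNReal.coe_ofNat, ← ENNReal.ofReal_ofNat]
    exact ofReal_mul_rpow_mul_le_of_rpow_le hd0 (by positivity) zero_le_four htrunc
  rw [← ENNReal.le_rpow_inv_iff hd0, ← one_div]
  calc ∫⁻ x, ‖v x‖ₑ ^ (1 / d) ∂ν
      ≤ ∑' k : ℤ, ENNReal.ofReal (2 ^ (k + 1)) ^ (1 / d) * ν {x | 2 ^ k ≤ ‖v x‖} :=
        lintegral_enorm_rpow_le_tsum ν hvm (by positivity)
    _ = ∑' k : ℤ, ENNReal.ofReal (2 ^ (k + 1 + 1)) ^ (1 / d) * ν {x | 2 ^ (k + 1) ≤ ‖v x‖} :=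
        ((Equiv.addRight (1 : ℤ)).tsum_eq _).symm
    _ ≤ ∑' k, ((4 * M : ℝ≥0) * I k) ^ (1 / d) := ENNReal.tsum_le_tsum hlevel
    _ ≤ (∑' k, (4 * M : ℝ≥0) * I k) ^ (1 / d) :=
        tsum_rpow_le_rpow_tsum _ ((one_le_div hd0).2 hd1)
    _ ≤ ((4 * M : ℝ≥0) * ∫⁻ y, ‖fderiv ℝ v y‖ₑ ∂ξ) ^ (1 / d) := by
        rw [ENNReal.tsum_mul_left]
        gcongr
        exact tsum_setLIntegral_dyadicShell_le ξ hvm _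

end truncation

section powerStep

lemma lintegral_enorm_rpow_lt_top {X G : Type*} [TopologicalSpace X] [MeasurableSpace X]
    [NormedAddCommGroup G] {ν : Measure X} {u : X → G}
    (hu : Continuous u) (hcs : HasCompactSupport u) (hν : ν (tsupport u) < ∞) {q : ℝ}
    (hq : 0 < q) : ∫⁻ x, ‖u x‖ₑ ^ q ∂ν < ∞ := by
  obtain ⟨M, hM⟩ := hcs.exists_bound_of_continuous hu
  have hsupp : Function.support (fun x ↦ ‖u x‖ₑ ^ q) ⊆ tsupport u := fun x hx ↦
    subset_tsupport u fun h0 ↦ hx (by simp [h0, hq])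
  calc ∫⁻ x, ‖u x‖ₑ ^ q ∂ν = ∫⁻ x in tsupport u, ‖u x‖ₑ ^ q ∂ν :=
        (setLIntegral_eq_of_support_subset hsupp).symm
    _ ≤ ∫⁻ _ in tsupport u, ENNReal.ofReal M ^ q ∂ν := by
        gcongr with x
        rw [← ofReal_norm]
        exact ENNReal.ofReal_le_ofReal (hM x)
    _ < ∞ := by
        rw [setLIntegral_const]
        exact ENNReal.mul_lt_top (ENNReal.rpow_lt_top_of_nonneg hq.le ENNReal.ofReal_ne_top) hν

variable [FiniteDimensional ℝ E] [MeasurableSpace E] [BorelSpace E] [Nontrivial F]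

lemma lintegral_mul_normWeight_le_Lp_mul_Lq {μ : Measure E} [μ.IsAddHaarMeasure]
    (hP : Function.Surjective P) {p p' : ℝ} (hpp : p.HolderConjugate p') (α r : ℝ)
    {f g : E → ℝ≥0∞} (hf : Measurable f) (hg : Measurable g) :
    ∫⁻ x, f x * g x ∂normWeight μ P (α + r * (1 / p')) ≤
      (∫⁻ x, f x ^ p ∂normWeight μ P (α * p)) ^ (1 / p) *
        (∫⁻ x, g x ^ p' ∂normWeight μ P r) ^ (1 / p') := by
  have hPm : ∀ s : ℝ, Measurable fun x ↦ ‖P x‖ₑ ^ s := measurable_enorm_clm_rpow P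
  rw [lintegral_normWeight _ (f := fun x ↦ f x * g x) (hf.mul hg),
    lintegral_normWeight _ (hf.pow_const p), lintegral_normWeight _ (hg.pow_const p')]
  calc ∫⁻ x, ‖P x‖ₑ ^ (α + r * (1 / p')) * (f x * g x) ∂μ
      = ∫⁻ x, ((fun x ↦ ‖P x‖ₑ ^ α * f x) * fun x ↦ ‖P x‖ₑ ^ (r * (1 / p')) * g x) x ∂μ := by
        refine lintegral_congr_ae ?_
        filter_upwards [ae_clm_ne_zero hP] with x hx
        rw [ENNReal.rpow_add _ _ (enorm_ne_zero.2 hx) enorm_ne_top, Pi.mul_apply,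
          mul_mul_mul_comm]
    _ ≤ _ := ENNReal.lintegral_mul_le_Lp_mul_Lq μ hpp ((hPm α).mul hf).aemeasurable
        ((hPm _).mul hg).aemeasurable
    _ = _ := by
        simp_rw [ENNReal.mul_rpow_of_nonneg _ _ hpp.nonneg,
          ENNReal.mul_rpow_of_nonneg _ _ hpp.symm.nonneg, ← ENNReal.rpow_mul, mul_assoc r,
          one_div_mul_cancel hpp.symm.ne_zero, mul_one]

lemma lintegral_enorm_fderiv_norm_rpow_le {μ : Measure E} [μ.IsAddHaarMeasure]
    (hP : Function.Surjective P) {p p' : ℝ} (hpp : p.HolderConjugate p') (α r : ℝ) {σ : ℝ≥0}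
    (hσ : 1 < σ) {u : E → ℝ} (hu : ContDiff ℝ 1 u) :
    ∫⁻ x, ‖fderiv ℝ (fun x ↦ ‖u x‖ ^ (σ : ℝ)) x‖ₑ ∂normWeight μ P (α + r * (1 / p')) ≤
      σ * (∫⁻ x, ‖fderiv ℝ u x‖ₑ ^ p ∂normWeight μ P (α * p)) ^ (1 / p) *
        (∫⁻ x, ‖u x‖ₑ ^ ((σ - 1) * p') ∂normWeight μ P r) ^ (1 / p') := by
  calc ∫⁻ x, ‖fderiv ℝ (fun x ↦ ‖u x‖ ^ (σ : ℝ)) x‖ₑ ∂normWeight μ P (α + r * (1 / p'))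
      ≤ ∫⁻ x, σ * (‖fderiv ℝ u x‖ₑ * ‖u x‖ₑ ^ (σ - 1 : ℝ)) ∂normWeight μ P (α + r * (1 / p')) := by
        gcongr with x
        exact (enorm_fderiv_norm_rpow_le (hu.differentiable one_ne_zero) hσ).trans_eq (by ring)
    _ ≤ σ * ((∫⁻ x, ‖fderiv ℝ u x‖ₑ ^ p ∂normWeight μ P (α * p)) ^ (1 / p) *
          (∫⁻ x, (‖u x‖ₑ ^ (σ - 1 : ℝ)) ^ p' ∂normWeight μ P r) ^ (1 / p')) := by
        rw [lintegral_const_mul' _ _ ENNReal.coe_ne_top]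
        gcongr
        exact lintegral_mul_normWeight_le_Lp_mul_Lq hP hpp α r
          (hu.continuous_fderiv one_ne_zero).enorm.measurable
          (hu.continuous.enorm.measurable.pow_const _)
    _ = _ := by simp_rw [← ENNReal.rpow_mul, mul_assoc]

-- The `L¹` bound for `‖u‖ ^ (q * d)` and Hölder leave a smaller power of `∫ ‖u‖ ^ q` on the right
-- than on the left, and this power can be divided out because the integral is finite.
lemma lintegral_rpow_le_of_L1_bound {μ : Measure E} [μ.IsAddHaarMeasure]
    (hP : Function.Surjective P) {p p' q d α r : ℝ} (hpp : p.HolderConjugate p') (hq : 0 < q)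
    (hr : -(finrank ℝ F : ℝ) < r) (hd : d = 1 / q + 1 / p') {K : ℝ≥0}
    (hL1 : ∀ v : E → ℝ, ContDiff ℝ 1 v → HasCompactSupport v →
      (∫⁻ x, ‖v x‖ₑ ^ (1 / d) ∂normWeight μ P r) ^ d ≤
        K * ∫⁻ x, ‖fderiv ℝ v x‖ₑ ∂normWeight μ P (α + r * (1 / p')))
    {u : E → ℝ} (hu : ContDiff ℝ 1 u) (hcs : HasCompactSupport u) :
    (∫⁻ x, ‖u x‖ₑ ^ q ∂normWeight μ P r) ^ (1 / q) ≤
      (K * (q * d).toNNReal : ℝ≥0) *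
        (∫⁻ x, ‖fderiv ℝ u x‖ₑ ^ p ∂normWeight μ P (α * p)) ^ (1 / p) := by
  have hp' : 0 < p' := hpp.symm.pos
  have hd0 : 0 < d := by rw [hd]; positivity
  have hσcoe : ((q * d).toNNReal : ℝ) = q * d := Real.coe_toNNReal _ (by positivity)
  set σ : ℝ≥0 := (q * d).toNNReal
  have hσq : (σ - 1 : ℝ) * p' = q := by rw [hσcoe, hd]; field_simp; ring
  have hσ1 : (1 : ℝ) < σ := sub_pos.1 (pos_of_mul_pos_left (hσq.symm ▸ hq) hp'.le)
  set A : ℝ≥0∞ := ∫⁻ x, ‖u x‖ₑ ^ q ∂normWeight μ P r with hA_def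
  have hA : A ≠ ∞ := (lintegral_enorm_rpow_lt_top hu.continuous hcs
    (normWeight_lt_top_of_hasCompactSupport hP hr hcs) hq).ne
  have hpow : ∫⁻ x, ‖‖u x‖ ^ (σ : ℝ)‖ₑ ^ (1 / d) ∂normWeight μ P r = A :=
    lintegral_congr fun x ↦ by
      rw [Real.enorm_rpow_of_nonneg (norm_nonneg _) σ.coe_nonneg, enorm_norm, ← ENNReal.rpow_mul,
        hσcoe, mul_assoc, mul_one_div_cancel hd0.ne', mul_one]
  have hholder := lintegral_enorm_fderiv_norm_rpow_le (μ := μ) hP hpp α r (σ := σ) hσ1 hu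
  rw [hσq, ← hA_def] at hholder
  refine rpow_le_of_rpow_add_le hA (by positivity) (one_div_nonneg.2 hp'.le) ?_
  calc A ^ (1 / q + 1 / p')
      ≤ K * ∫⁻ x, ‖fderiv ℝ (fun x ↦ ‖u x‖ ^ (σ : ℝ)) x‖ₑ ∂normWeight μ P (α + r * (1 / p')) := by
        rw [← hd, ← hpow]
        exact hL1 _ (hu.norm_rpow hσ1)
          (hcs.comp_left (g := fun y : ℝ ↦ ‖y‖ ^ (σ : ℝ)) (by simp [hσcoe, hq.ne', hd0.ne']))
    _ ≤ K * (σ * (∫⁻ x, ‖fderiv ℝ u x‖ₑ ^ p ∂normWeight μ P (α * p)) ^ (1 / p) *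
          A ^ (1 / p')) := by gcongr
    _ = _ := by rw [ENNReal.coe_mul, mul_assoc, mul_assoc, mul_assoc]

lemma exists_lintegral_normWeight_rpow_le (μ : Measure E) [μ.IsAddHaarMeasure]
    (hP : Function.Surjective P) {p q d α r : ℝ} (hp : 1 ≤ p) (hpq : p ≤ q)
    (hr : -(finrank ℝ F : ℝ) < r) (hd : d = 1 + 1 / q - 1 / p)
    (hc : 0 ≤ α - r / q) (hbal : d = (finrank ℝ E + (α - r / q) - 1) / finrank ℝ E) :
    ∃ K : ℝ≥0, ∀ u : E → ℝ, ContDiff ℝ 1 u → HasCompactSupport u →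
      (∫⁻ x, ‖u x‖ₑ ^ q ∂normWeight μ P r) ^ (1 / q) ≤
        K * (∫⁻ x, ‖fderiv ℝ u x‖ₑ ^ p ∂normWeight μ P (α * p)) ^ (1 / p) := by
  have : Nontrivial E := hP.nontrivial
  have hN : 0 < (finrank ℝ E : ℝ) := by exact_mod_cast finrank_pos
  have hp0 : 0 < p := by linarith
  have hq0 : 0 < q := by linarith
  have hd0 : 0 < d := by
    have := one_div_pos.2 hq0
    have := (div_le_one hp0).2 hp
    linarith
  have hd1 : d ≤ 1 := by linarith [one_div_le_one_div_of_le hp0 hpq]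
  have hc1 : α - r / q ≤ 1 := by
    rw [hbal, div_le_one hN] at hd1
    linarith
  obtain ⟨C, hC⟩ := exists_normWeight_superlevel_rpow_le μ hP hr hc hc1 hbal hd0
  obtain ⟨K, hK⟩ := exists_lintegral_rpow_le_of_superlevel_rpow_le hd0 hd1 hC
  rw [show α - r / q + r * d = α + r * (1 - 1 / p) by rw [hd]; ring] at hK
  rcases hp.eq_or_lt with rfl | hp1
  · have hdq : d = 1 / q := by rw [hd]; ring
    exact ⟨K, fun u hu hcs ↦ by simpa [hdq] using hK u hu hcs⟩
  · have hpp : p.HolderConjugate p.conjExponent := .conjExponent hp1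
    have hinv : 1 - 1 / p = 1 / p.conjExponent := by
      rw [one_div, one_div, hpp.one_sub_inv]
    rw [hinv] at hK
    exact ⟨_, fun u hu hcs ↦ lintegral_rpow_le_of_L1_bound hP hpp hq0 hr
      (by rw [← hinv, hd]; ring) hK hu hcs⟩

end powerStep

theorem weighted_sobolev_Rnm_general [FiniteDimensional ℝ E] [MeasurableSpace E] [BorelSpace E]
    [Nontrivial F] (μ : Measure E) [μ.IsAddHaarMeasure] (hP : Function.Surjective P)
    {p q α β : ℝ} (hp : 1 ≤ p) (hpq : p ≤ q) (hαβ : 0 ≤ α + β) (hβ : β < finrank ℝ F / q)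
    (hbal : 1 / q = 1 / p + (α + β - 1) / finrank ℝ E) :
    ∃ S : ℝ, 0 < S ∧ ∀ u : E → ℝ, ContDiff ℝ 1 u → HasCompactSupport u →
      (∫⁻ x, ‖P x‖ₑ ^ (-(β * q)) * ‖u x‖ₑ ^ q ∂μ) ^ (1 / q) ≤
        ENNReal.ofReal S * (∫⁻ x, ‖P x‖ₑ ^ (α * p) * ‖fderiv ℝ u x‖ₑ ^ p ∂μ) ^ (1 / p) := by
  have : Nontrivial E := hP.nontrivial
  have hN : (finrank ℝ E : ℝ) ≠ 0 := by exact_mod_cast finrank_pos.ne'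
  have hq : 0 < q := by linarith
  have hr : -(finrank ℝ F : ℝ) < -(β * q) := neg_lt_neg ((lt_div_iff₀ hq).1 hβ)
  have hc : α - -(β * q) / q = α + β := by field_simp; ring
  obtain ⟨K, hK⟩ := exists_lintegral_normWeight_rpow_le μ hP (α := α) hp hpq hr rfl
    (by rwa [hc]) (by rw [hbal, hc]; field_simp; ring)
  refine ⟨K + 1, by positivity, fun u hu hcs ↦ ?_⟩
  rw [← lintegral_normWeight _ (hu.continuous.enorm.measurable.pow_const q),
    ← lintegral_normWeight _
      ((hu.continuous_fderiv one_ne_zero).enorm.measurable.pow_const p)]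
  refine (hK u hu hcs).trans ?_
  gcongr
  rw [← ENNReal.ofReal_coe_nnreal]
  exact ENNReal.ofReal_le_ofReal (by linarith)

/-- The projection `(x, x̂) ↦ x̂`, whose norm is `hatNorm`. -/
def hatProj (n m : ℕ) :
    EuclideanSpace ℝ (Fin n ⊕ Fin m) →L[ℝ] EuclideanSpace ℝ (Fin m) :=
  LinearMap.toContinuousLinearMap
    { toFun := fun X ↦ WithLp.toLp 2 fun j ↦ X (Sum.inr j)
      map_add' := fun _ _ ↦ rfl
      map_smul' := fun _ _ ↦ rfl }

lemma hatProj_surjective (n m : ℕ) : Function.Surjective (hatProj n m) := fun Y ↦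
  ⟨WithLp.toLp 2 (Sum.elim 0 Y), rfl⟩

lemma ofReal_hatNorm {n m : ℕ} (X : EuclideanSpace ℝ (Fin n ⊕ Fin m)) :
    ENNReal.ofReal (hatNorm n m X) = ‖hatProj n m X‖ₑ := by
  rw [← ofReal_norm, EuclideanSpace.norm_eq]
  simp only [Real.norm_eq_abs, sq_abs]
  rfl

end Development

/-- Weighted Sobolev inequality with partial variable weight `|x̂|` on `ℝ^{n+m}`. -/
theorem weighted_sobolev_Rnm
    (n m : ℕ) (hm : 1 ≤ m) (hnm : 2 ≤ n + m) (p q α β : ℝ)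
    (hp1 : 1 < p) (hpq : p ≤ q)
    (hαβ : 0 ≤ α + β) (hα : α < m * (1 - 1 / p)) (hβ : β < m / q)
    (hbal : 1 / q = 1 / p + (α + β - 1) / ((n : ℝ) + m)) :
    ∃ S : ℝ, 0 < S ∧
      ∀ u : EuclideanSpace ℝ (Fin n ⊕ Fin m) → ℝ,
        ContDiff ℝ (⊤ : ℕ∞) u → HasCompactSupport u →
        (∫⁻ X, ENNReal.ofReal (hatNorm n m X) ^ (-(β * q)) *
            ENNReal.ofReal |u X| ^ q) ^ (1 / q)
          ≤ ENNReal.ofReal S *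
            (∫⁻ X, ENNReal.ofReal (hatNorm n m X) ^ (α * p) *
                ENNReal.ofReal ‖fderiv ℝ u X‖ ^ p) ^ (1 / p) := by
  have : Nonempty (Fin m) := ⟨⟨0, hm⟩⟩
  obtain ⟨S, hS, hbound⟩ := weighted_sobolev_Rnm_general volume (hatProj_surjective n m) hp1.le hpq
    hαβ (by simpa using hβ) (by simpa using hbal)
  refine ⟨S, hS, fun u hu hcs ↦ ?_⟩
  simpa only [ofReal_hatNorm, ← Real.enorm_eq_ofReal_abs, ofReal_norm] using
    hbound u (hu.of_le (by exact_mod_cast le_top)) hcs
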